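/- Let u : ℝ → ℝ be twice differentiable on an open interval containing (0,1), with u'' continuous on (0,1), with u continuous on [0,1], such that u''(x)² − (1 + eˣ)·u''(x) + eˣ = 0 for all x ∈ (0,1) and u(0) = u(1) = 0. Then either u(x) = x²/2 − x/2 for all x ∈ [0,1], or u(x) = eˣ − (e − 1)x − 1 for all x ∈ [0,1]. In particular the boundary value problem of Example 1 has exactly the two solutions u₁ and u₂. -/

import Mathlib

/-!
The equation factors as `(u'' - 1) (u'' - eˣ) = 0`, so at each point of `(0, 1)` the second
derivative takes one of two values, which differ because `x ≠ 0`. All of `u''`, `1` and `eˣ` are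
derivatives, so by Darboux's theorem `u''` cannot jump from one branch to the other. On either
branch `u''` is prescribed, so `u` is determined up to an affine function, which the two boundary
values fix.
-/

open Set

section EqualDerivatives

variable {𝕜 E : Type*} [RCLike 𝕜] [NormedAddCommGroup E] [NormedSpace 𝕜 E]

theorem exists_eqOn_add_const_of_hasDerivAt {f g f' : 𝕜 → E} {s : Set 𝕜} (hs : IsOpen s)
    (hs' : IsPreconnected s) (hf : ∀ x ∈ s, HasDerivAt f (f' x) x)
    (hg : ∀ x ∈ s, HasDerivAt g (f' x) x) : ∃ c, EqOn f (fun x ↦ g x + c) s :=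
  hs.exists_eq_add_of_deriv_eq hs'
    (fun x hx ↦ (hf x hx).differentiableAt.differentiableWithinAt)
    (fun x hx ↦ (hg x hx).differentiableAt.differentiableWithinAt)
    fun x hx ↦ (hf x hx).deriv.trans (hg x hx).deriv.symm

theorem exists_eqOn_add_affine_of_hasDerivAt_of_hasDerivAt {f g f' g' f'' : 𝕜 → E} {s : Set 𝕜}
    (hs : IsOpen s) (hs' : IsPreconnected s)
    (hf : ∀ x ∈ s, HasDerivAt f (f' x) x) (hf' : ∀ x ∈ s, HasDerivAt f' (f'' x) x)
    (hg : ∀ x ∈ s, HasDerivAt g (g' x) x) (hg' : ∀ x ∈ s, HasDerivAt g' (f'' x) x) :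
    ∃ c d, EqOn f (fun x ↦ g x + x • c + d) s := by
  obtain ⟨c, hc⟩ := exists_eqOn_add_const_of_hasDerivAt hs hs' hf' hg'
  have hgc : ∀ x ∈ s, HasDerivAt (fun x ↦ g x + x • c) (f' x) x := fun x hx ↦ by
    rw [hc hx]
    simpa only [id, one_smul] using (hg x hx).fun_add ((hasDerivAt_id x).smul_const c)
  exact ⟨c, exists_eqOn_add_const_of_hasDerivAt hs hs' hf hgc⟩

end EqualDerivatives

theorem eqOn_Icc_of_hasDerivAt_of_hasDerivAt {E : Type*} [NormedAddCommGroup E] [NormedSpace ℝ E]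
    {f g f' g' f'' : ℝ → E} {a b : ℝ}
    (hfc : ContinuousOn f (Icc a b)) (hgc : ContinuousOn g (Icc a b))
    (hf : ∀ x ∈ Ioo a b, HasDerivAt f (f' x) x) (hf' : ∀ x ∈ Ioo a b, HasDerivAt f' (f'' x) x)
    (hg : ∀ x ∈ Ioo a b, HasDerivAt g (g' x) x) (hg' : ∀ x ∈ Ioo a b, HasDerivAt g' (f'' x) x)
    (ha : f a = g a) (hb : f b = g b) : EqOn f g (Icc a b) := by
  rcases le_or_gt b a with hba | hab
  · intro x hx
    rwa [le_antisymm (hx.2.trans hba) hx.1]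
  obtain ⟨c, d, hIoo⟩ :=
    exists_eqOn_add_affine_of_hasDerivAt_of_hasDerivAt isOpen_Ioo isPreconnected_Ioo hf hf' hg hg'
  have hIcc : EqOn f (fun x ↦ g x + x • c + d) (Icc a b) :=
    hIoo.of_subset_closure hfc (by fun_prop) Ioo_subset_Icc_self (closure_Ioo hab.ne).ge
  have hvanish : ∀ x ∈ Icc a b, f x = g x → x • c + d = 0 := fun x hx hfg ↦ by
    simpa only [hfg, add_assoc, left_eq_add] using hIcc hx
  have hca : a • c + d = 0 := hvanish a (left_mem_Icc.2 hab.le) ha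
  have hcb : b • c + d = 0 := hvanish b (right_mem_Icc.2 hab.le) hb
  have hc : c = 0 := by
    have hsmul : (b - a) • c = 0 := by
      rw [sub_smul, ← add_sub_add_right_eq_sub _ _ d, hca, hcb, sub_zero]
    exact (smul_eq_zero.1 hsmul).resolve_left (sub_pos.2 hab).ne'
  have hd : d = 0 := by simpa only [hc, smul_zero, zero_add] using hca
  simpa only [hc, hd, smul_zero, add_zero] using hIcc

theorem eqOn_or_eqOn_of_hasDerivWithinAt {f g h f' g' h' : ℝ → ℝ} {s : Set ℝ} (hs : Convex ℝ s)
    (hf : ∀ x ∈ s, HasDerivWithinAt f (f' x) s x) (hg : ∀ x ∈ s, HasDerivWithinAt g (g' x) s x)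
    (hh : ∀ x ∈ s, HasDerivWithinAt h (h' x) s x) (hne : ∀ x ∈ s, g' x ≠ h' x)
    (hor : ∀ x ∈ s, f' x = g' x ∨ f' x = h' x) : EqOn f' g' s ∨ EqOn f' h' s := by
  have hgh_sign : (∀ x ∈ s, g' x - h' x < 0) ∨ ∀ x ∈ s, 0 < g' x - h' x :=
    hasDerivWithinAt_forall_lt_or_forall_gt_of_forall_ne hs
      (fun x hx ↦ (hg x hx).sub (hh x hx)) fun x hx ↦ sub_ne_zero.2 (hne x hx)
  -- The sum is `g' - h'` where `f' = g'` and `h' - g'` where `f' = h'`, so its sign tells which.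
  have hsum_sign : (∀ x ∈ s, f' x - g' x + (f' x - h' x) < 0) ∨
      ∀ x ∈ s, 0 < f' x - g' x + (f' x - h' x) :=
    hasDerivWithinAt_forall_lt_or_forall_gt_of_forall_ne hs
      (fun x hx ↦ ((hf x hx).sub (hg x hx)).add ((hf x hx).sub (hh x hx))) fun x hx ↦ by
        rcases hor x hx with hfg | hfh
        · simpa only [hfg, sub_self, zero_add] using sub_ne_zero.2 (hne x hx)
        · simpa only [hfh, sub_self, add_zero] using sub_ne_zero.2 (hne x hx).symm
  have eqOn_left (hfh : ∀ x ∈ s, f' x ≠ h' x) : EqOn f' g' s :=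
    fun x hx ↦ (hor x hx).resolve_right (hfh x hx)
  have eqOn_right (hfg : ∀ x ∈ s, f' x ≠ g' x) : EqOn f' h' s :=
    fun x hx ↦ (hor x hx).resolve_left (hfg x hx)
  rcases hgh_sign with hgh | hgh <;> rcases hsum_sign with hsum | hsum
  · exact .inl <| eqOn_left fun x hx hfh ↦ by linarith [hgh x hx, hsum x hx]
  · exact .inr <| eqOn_right fun x hx hfg ↦ by linarith [hgh x hx, hsum x hx]
  · exact .inr <| eqOn_right fun x hx hfg ↦ by linarith [hgh x hx, hsum x hx]
  · exact .inl <| eqOn_left fun x hx hfh ↦ by linarith [hgh x hx, hsum x hx]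

theorem sq_sub_add_mul_add_mul_eq_zero_iff {R : Type*} [CommRing R] [NoZeroDivisors R]
    {p q y : R} : y ^ 2 - (p + q) * y + p * q = 0 ↔ y = p ∨ y = q := by
  rw [show y ^ 2 - (p + q) * y + p * q = (y - p) * (y - q) by ring, mul_eq_zero, sub_eq_zero,
    sub_eq_zero]

theorem hasDerivAt_sq_div_two_sub_div_two (x : ℝ) :
    HasDerivAt (fun x : ℝ ↦ x ^ 2 / 2 - x / 2) (x - 1 / 2) x :=
  (((hasDerivAt_pow 2 x).div_const 2).sub ((hasDerivAt_id x).div_const 2)).congr_deriv (by simp)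

theorem hasDerivAt_exp_sub_mul_sub (m k x : ℝ) :
    HasDerivAt (fun x ↦ Real.exp x - m * x - k) (Real.exp x - m) x :=
  (((Real.hasDerivAt_exp x).sub ((hasDerivAt_id x).const_mul m)).sub_const k).congr_deriv (by simp)

theorem example1_exactly_two_solutions_general (u : ℝ → ℝ)
    (hdiff : ∀ x ∈ Ioo (0 : ℝ) 1, DifferentiableAt ℝ u x)
    (hdiff' : ∀ x ∈ Ioo (0 : ℝ) 1, DifferentiableAt ℝ (deriv u) x)
    (hcont : ContinuousOn u (Icc 0 1))
    (heq : ∀ x ∈ Ioo (0 : ℝ) 1,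
      (deriv (deriv u) x) ^ 2 - (1 + Real.exp x) * deriv (deriv u) x + Real.exp x = 0)
    (hu0 : u 0 = 0) (hu1 : u 1 = 0) :
    (∀ x ∈ Icc (0 : ℝ) 1, u x = x ^ 2 / 2 - x / 2) ∨
    (∀ x ∈ Icc (0 : ℝ) 1, u x = Real.exp x - (Real.exp 1 - 1) * x - 1) := by
  have hu : ∀ x ∈ Ioo (0 : ℝ) 1, HasDerivAt u (deriv u x) x := fun x hx ↦ (hdiff x hx).hasDerivAt
  have hu' : ∀ x ∈ Ioo (0 : ℝ) 1, HasDerivAt (deriv u) (deriv (deriv u) x) x :=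
    fun x hx ↦ (hdiff' x hx).hasDerivAt
  have hbranch : EqOn (deriv (deriv u)) (fun _ ↦ 1) (Ioo 0 1) ∨
      EqOn (deriv (deriv u)) Real.exp (Ioo 0 1) :=
    eqOn_or_eqOn_of_hasDerivWithinAt (convex_Ioo 0 1) (fun x hx ↦ (hu' x hx).hasDerivWithinAt)
      (fun x _ ↦ hasDerivWithinAt_id x _) (fun x _ ↦ (Real.hasDerivAt_exp x).hasDerivWithinAt)
      (fun x hx ↦ (Real.one_lt_exp_iff.2 hx.1).ne)
      fun x hx ↦ sq_sub_add_mul_add_mul_eq_zero_iff.1 (by simpa only [one_mul] using heq x hx)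
  refine hbranch.imp (fun hone ↦ ?_) fun hexp ↦ ?_
  · exact eqOn_Icc_of_hasDerivAt_of_hasDerivAt hcont (by fun_prop) hu hu'
      (fun x _ ↦ hasDerivAt_sq_div_two_sub_div_two x)
      (fun x hx ↦ hone hx ▸ (hasDerivAt_id x).sub_const _) (by simp [hu0]) (by simp [hu1])
  · exact eqOn_Icc_of_hasDerivAt_of_hasDerivAt hcont (by fun_prop) hu hu'
      (fun x _ ↦ hasDerivAt_exp_sub_mul_sub _ _ x)
      (fun x hx ↦ hexp hx ▸ (Real.hasDerivAt_exp x).sub_const _) (by simp [hu0]) (by simp [hu1])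

theorem example1_exactly_two_solutions (u : ℝ → ℝ) (a b : ℝ)
    (ha : a < 0) (hb : 1 < b)
    (hdiff : ∀ x ∈ Set.Ioo a b, DifferentiableAt ℝ u x)
    (hdiff' : ∀ x ∈ Set.Ioo a b, DifferentiableAt ℝ (deriv u) x)
    (hcont'' : ContinuousOn (deriv (deriv u)) (Set.Ioo 0 1))
    (hcont : ContinuousOn u (Set.Icc 0 1))
    (heq : ∀ x ∈ Set.Ioo (0 : ℝ) 1,
      (deriv (deriv u) x) ^ 2 - (1 + Real.exp x) * deriv (deriv u) x + Real.exp x = 0)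
    (hu0 : u 0 = 0) (hu1 : u 1 = 0) :
    (∀ x ∈ Set.Icc (0 : ℝ) 1, u x = x ^ 2 / 2 - x / 2) ∨
    (∀ x ∈ Set.Icc (0 : ℝ) 1, u x = Real.exp x - (Real.exp 1 - 1) * x - 1) :=
  have hsub : Ioo 0 1 ⊆ Ioo a b := Ioo_subset_Ioo ha.le hb.le
  example1_exactly_two_solutions_general u (fun x hx ↦ hdiff x (hsub hx))
    (fun x hx ↦ hdiff' x (hsub hx)) hcont heq hu0 hu1
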